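/- There are infinitely many pairs consisting of a rational right triangle and a θ-rational rhombus with a common area and a common perimeter. Precisely: the set of pairs of rationals (u, v) with 0 < u < 1 and 0 < v < 1 such that the right triangle with sides (1−u², 2u, 1+u²) and the rhombus with side p = (1+u)/2 and sin θ = 2v/(1+v²) have equal area and equal perimeter, i.e. u(1−u²) = ((1+u)/2)²·(2v/(1+v²)), is infinite. -/

import Mathlib

/-!
Dividing by `1 + u`, equality of areas reads `2u(1 - u)(1 + v²) = (1 + u)v`. In terms of `u` and
`x = 8(1 - u)v/u` this is `(x² + 64)u² - 4(x + 32)u - 4(x - 16) = 0`, a quadratic in `u` whose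
discriminant is a square exactly when `x³ - 15x² + 128x` is a square `y²`. Each rational point
`(x, y)` of this elliptic curve thus gives a solution `(u, v)`; changing the sign of `y` if
necessary achieves `0 < u < 1`, and the symmetry `v ↦ v⁻¹` then achieves `0 < v < 1`.

Infinitely many points come from one point with `|x|₂ > 1`: doubling multiplies `|x|₂` by `4`. The
solutions obtained are distinct because `|u|₂² |x|₂ = |2|₂²`.
-/

open WeierstrassCurve

section Valuation

variable {R A Γ₀ : Type*} [CommRing R] [CommRing A] [LinearOrderedCommGroupWithZero Γ₀]
  {W : WeierstrassCurve R} [W.IsCharNeTwoNF] {f : R →+* A} {v : Valuation A Γ₀}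

lemma valuation_pow_add_quadratic {a b c x : A} {n : ℕ} (ha : v a ≤ 1) (hb : v b ≤ 1)
    (hc : v c ≤ 1) (hx : 1 < v x) (hn : 2 < n) :
    v (x ^ n + (a * x ^ 2 + b * x + c)) = v x ^ n := by
  have hx2 : v x ≤ v x ^ 2 := le_self_pow₀ hx.le two_ne_zero
  have hquad : v (a * x ^ 2 + b * x + c) ≤ v x ^ 2 := by
    refine v.map_add_le (v.map_add_le ?_ ?_) (hc.trans (hx.le.trans hx2))
    · rw [map_mul, map_pow]
      exact mul_le_of_le_one_left' ha
    · rw [map_mul]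
      exact (mul_le_of_le_one_left' hb).trans hx2
  rw [← map_pow]
  exact v.map_add_eq_of_lt_left (hquad.trans_lt (by rw [map_pow]; exact pow_lt_pow_right₀ hx hn))

lemma valuation_y_sq_eq_valuation_x_cube {x y : A} (hf : ∀ r, v (f r) ≤ 1)
    (h : Affine.Equation (W.map f) x y) (hx : 1 < v x) : v y ^ 2 = v x ^ 3 := by
  have hxy : y ^ 2 = x ^ 3 + (f W.a₂ * x ^ 2 + f W.a₄ * x + f W.a₆) := by
    rw [Affine.equation_iff] at h
    simpa [add_assoc] using h
  rw [← map_pow, hxy]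
  exact valuation_pow_add_quadratic (hf _) (hf _) (hf _) hx (by norm_num)

lemma negY_map_of_isCharNeTwoNF {x y : A} : Affine.negY (W.map f) x y = -y := by
  simp [Affine.negY]

end Valuation

section Doubling

lemma addX_slope_self_mul_sq {F : Type*} [Field F] [DecidableEq F] {W : Affine F} {x y : F}
    (h : W.Equation x y) (hy : y ≠ W.negY x y) :
    W.addX x x (W.slope x x y y) * (y - W.negY x y) ^ 2 =
      x ^ 4 - W.b₄ * x ^ 2 - 2 * W.b₆ * x - W.b₈ := by
  have hy' : y - W.negY x y ≠ 0 := sub_ne_zero.2 hy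
  have hslope : W.slope x x y y * (y - W.negY x y) =
      3 * x ^ 2 + 2 * W.a₂ * x + W.a₄ - W.a₁ * y := by
    rw [Affine.slope_of_Y_ne rfl hy, div_mul_cancel₀ _ hy']
  rw [Affine.equation_iff] at h
  simp only [Affine.addX, Affine.negY, b₄, b₆, b₈] at hslope ⊢
  linear_combination (-8 * x - 4 * W.a₂ - W.a₁ ^ 2) * h +
    (W.slope x x y y * (2 * y + W.a₁ * x + W.a₃) + (3 * x ^ 2 + 2 * W.a₂ * x + W.a₄ - W.a₁ * y) +
      W.a₁ * (2 * y + W.a₁ * x + W.a₃)) * hslope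

variable {R K Γ₀ : Type*} [CommRing R] [Field K] [LinearOrderedCommGroupWithZero Γ₀]
  {W : WeierstrassCurve R} [W.IsCharNeTwoNF] {f : R →+* K} {v : Valuation K Γ₀} {x y : K}

lemma ne_negY_of_one_lt_valuation_x (hf : ∀ r, v (f r) ≤ 1) (h2 : (2 : K) ≠ 0)
    (h : Affine.Equation (W.map f) x y) (hx : 1 < v x) : y ≠ Affine.negY (W.map f) x y := by
  rw [negY_map_of_isCharNeTwoNF]
  intro hy
  have hy0 : y = 0 := by
    refine (mul_eq_zero.1 ?_).resolve_left h2
    linear_combination hy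
  have hvx := valuation_y_sq_eq_valuation_x_cube hf h hx
  rw [hy0, map_zero, zero_pow two_ne_zero] at hvx
  exact pow_ne_zero 3 (zero_lt_one.trans hx).ne' hvx.symm

lemma valuation_addX_slope_self_mul_sq [DecidableEq K] (hf : ∀ r, v (f r) ≤ 1) (h2 : (2 : K) ≠ 0)
    (h : Affine.Equation (W.map f) x y) (hx : 1 < v x) :
    v (Affine.addX (W.map f) x x (Affine.slope (W.map f) x x y y)) * v 2 ^ 2 = v x := by
  set x' := Affine.addX (W.map f) x x (Affine.slope (W.map f) x x y y)
  have hdup : x' * (2 * y) ^ 2 =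
      x ^ 4 + (f (-W.b₄) * x ^ 2 + f (-2 * W.b₆) * x + f (-W.b₈)) := by
    have := addX_slope_self_mul_sq h (ne_negY_of_one_lt_valuation_x hf h2 h hx)
    rw [negY_map_of_isCharNeTwoNF, map_b₄, map_b₆, map_b₈] at this
    simp only [map_neg, map_mul, map_ofNat]
    linear_combination this
  have hy := valuation_y_sq_eq_valuation_x_cube hf h hx
  have hval : v x' * v 2 ^ 2 * v x ^ 3 = v x * v x ^ 3 := by
    calc v x' * v 2 ^ 2 * v x ^ 3 = v (x' * (2 * y) ^ 2) := by
          rw [map_mul, map_pow, map_mul, mul_pow, hy, mul_assoc]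
      _ = v x ^ 4 := by
          rw [hdup, valuation_pow_add_quadratic (hf _) (hf _) (hf _) hx (by norm_num)]
      _ = v x * v x ^ 3 := pow_succ' _ _
  exact mul_right_cancel₀ (pow_ne_zero 3 (zero_lt_one.trans hx).ne') hval

lemma infinite_valuation_image_x (hf : ∀ r, v (f r) ≤ 1) (h2 : (2 : K) ≠ 0) (hv2 : v 2 < 1)
    (hne : ∃ x y, Affine.Equation (W.map f) x y ∧ 1 < v x) :
    (v '' {x | 1 < v x ∧ ∃ y, Affine.Equation (W.map f) x y}).Infinite := by
  classical
  intro hfin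
  obtain ⟨x₀, y₀, h₀, hx₀⟩ := hne
  obtain ⟨m, hm⟩ := hfin.exists_maximal ⟨v x₀, x₀, ⟨hx₀, y₀, h₀⟩, rfl⟩
  obtain ⟨x, ⟨hx, y, h⟩, rfl⟩ := hm.prop
  have hdouble := valuation_addX_slope_self_mul_sq hf h2 h hx
  have hlt : v x < v (Affine.addX (W.map f) x x (Affine.slope (W.map f) x x y y)) := by
    refine hdouble.symm.trans_lt (mul_lt_of_lt_one_right (zero_lt_iff.2 fun h0 => ?_) ?_)
    · rw [h0, zero_mul] at hdouble
      exact (zero_lt_one.trans hx).ne hdouble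
    · exact pow_lt_one₀ zero_le hv2 two_ne_zero
  have hxy := ne_negY_of_one_lt_valuation_x hf h2 h hx
  exact hm.not_gt ⟨_, ⟨hx.trans hlt, _, Affine.equation_add h h fun hn => hxy hn.2⟩, rfl⟩ hlt

end Doubling

section Curve

/-- The elliptic curve `y² = x³ - 15x² + 128x` whose rational points parametrize the pairs of a
rational right triangle and a `θ`-rational rhombus with equal area and perimeter. -/
def pairCurve : WeierstrassCurve ℤ := ⟨0, -15, 0, 128, 0⟩

instance : pairCurve.IsCharNeTwoNF := ⟨rfl, rfl⟩

lemma equation_map_pairCurve_iff {K : Type*} [CommRing K] {f : ℤ →+* K} {x y : K} :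
    Affine.Equation (pairCurve.map f) x y ↔ y ^ 2 = x ^ 3 - 15 * x ^ 2 + 128 * x := by
  simp [Affine.equation_iff, pairCurve, sub_eq_add_neg]

lemma infinite_padicValuation_two_image_x :
    (Rat.padicValuation 2 '' {x | 1 < Rat.padicValuation 2 x ∧
      ∃ y : ℚ, y ^ 2 = x ^ 3 - 15 * x ^ 2 + 128 * x}).Infinite := by
  simp only [← equation_map_pairCurve_iff (f := Int.castRingHom ℚ)]
  refine infinite_valuation_image_x (Int.padicValuation_le_one 2) two_ne_zero ?_ ?_
  · exact_mod_cast (Int.padicValuation_lt_one_iff (p := 2) (x := 2)).2 (by norm_num)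
  -- This point is `3(8, 24) + (0, 0)`.
  refine ⟨49 / 16, 1071 / 64, equation_map_pairCurve_iff.2 (by norm_num), ?_⟩
  rw [← not_le, Rat.padicValuation_le_one_iff]
  norm_num

end Curve

section Parametrization

/-- The parameter `u` of the triangle attached to the point `(x, y)` of `pairCurve`: a root of
`(x² + 64)u² - 4(x + 32)u - 4(x - 16)`, the other root being attached to `(x, -y)`. -/
def triangleParam {K : Type*} [Field K] (x y : K) : K := 2 * (x + 32 + y) / (x ^ 2 + 64)

lemma valuation_triangleParam_sq_mul {K Γ₀ : Type*} [Field K]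
    [LinearOrderedCommGroupWithZero Γ₀] {v : Valuation K Γ₀} {x y : K} (hx : 1 < v x)
    (h : v y ^ 2 = v x ^ 3) : v (triangleParam x y) ^ 2 * v x = v 2 ^ 2 := by
  have hvx0 : v x ≠ 0 := (zero_lt_one.trans hx).ne'
  have hv2 : v 2 ≤ 1 := one_add_one_eq_two (R := K) ▸ v.map_add_le v.map_one.le v.map_one.le
  have hxy : v x < v y := by
    refine lt_of_pow_lt_pow_left₀ 2 zero_le ?_
    rw [h]
    exact pow_lt_pow_right₀ hx (by norm_num)
  have hnum : v (x + 32 + y) = v y := by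
    refine v.map_add_eq_of_lt_right ((v.map_add_le le_rfl ?_).trans_lt hxy)
    rw [show (32 : K) = 2 ^ 5 by norm_num, map_pow]
    exact (pow_le_one₀ zero_le hv2).trans hx.le
  have hden : v (x ^ 2 + 64) = v x ^ 2 := by
    rw [← map_pow]
    refine v.map_add_eq_of_lt_left ?_
    rw [show (64 : K) = 2 ^ 6 by norm_num, map_pow, map_pow]
    exact (pow_le_one₀ zero_le hv2).trans_lt (one_lt_pow₀ hx two_ne_zero)
  rw [triangleParam, map_div₀, map_mul, hnum, hden, div_pow, mul_pow, h]
  field_simp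

variable {K : Type*} [Field K] [LinearOrder K] [IsStrictOrderedRing K] {x y u t : K}

lemma triangleParam_quadratic_eq (h : y ^ 2 = x ^ 3 - 15 * x ^ 2 + 128 * x) :
    64 * (1 - triangleParam x y) ^ 2 + (triangleParam x y * x) ^ 2 =
      4 * (1 + triangleParam x y) * x := by
  have hu : triangleParam x y * (x ^ 2 + 64) = 2 * (x + 32 + y) :=
    div_mul_cancel₀ _ (by positivity)
  refine mul_left_cancel₀ (show x ^ 2 + 64 ≠ 0 by positivity) ?_
  linear_combination 4 * h + (triangleParam x y * (x ^ 2 + 64) - 2 * (x + 32) + 2 * y) * hu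

lemma x_pos_of_sq_eq (hx : x ≠ 0) (h : y ^ 2 = x ^ 3 - 15 * x ^ 2 + 128 * x) : 0 < x := by
  have hfactor : 0 < x ^ 2 - 15 * x + 128 := by nlinarith [sq_nonneg (2 * x - 15)]
  refine hx.symm.lt_of_le (nonneg_of_mul_nonneg_left ?_ hfactor)
  calc 0 ≤ y ^ 2 := sq_nonneg y
    _ = x * (x ^ 2 - 15 * x + 128) := by rw [h]; ring

lemma exists_triangleParam_mem_Ioo (hx : x ≠ 0) (hx8 : x ≠ 8)
    (h : y ^ 2 = x ^ 3 - 15 * x ^ 2 + 128 * x) :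
    ∃ z, z ^ 2 = y ^ 2 ∧ triangleParam x z ∈ Set.Ioo 0 1 := by
  have hx_pos := x_pos_of_sq_eq hx h
  have hden : 0 < x ^ 2 + 64 := by positivity
  simp only [triangleParam, Set.mem_Ioo, div_lt_one hden]
  rcases lt_or_gt_of_ne hx8 with hlt | hgt
  · have hpos : |y| < x + 32 := by
      refine abs_lt_of_sq_lt_sq (sub_pos.1 ?_) (by positivity)
      rw [show (x + 32) ^ 2 - y ^ 2 = (16 - x) * (x ^ 2 + 64) by linear_combination -h]
      exact mul_pos (by linarith) hden
    have hlt_one : |x * (x - 2)| < |2 * y| := by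
      refine sq_lt_sq.1 (sub_pos.1 ?_)
      rw [show (2 * y) ^ 2 - (x * (x - 2)) ^ 2 = x * (8 - x) * (x ^ 2 + 64) by
        linear_combination 4 * h]
      exact mul_pos (mul_pos hx_pos (by linarith)) hden
    rw [abs_mul 2, abs_two] at hlt_one
    refine ⟨-|y|, by rw [neg_sq, sq_abs], div_pos (by linarith) hden, ?_⟩
    linarith [neg_abs_le (x * (x - 2))]
  · have hlt_one : |2 * y| < |x * (x - 2)| := by
      refine sq_lt_sq.1 (sub_pos.1 ?_)
      rw [show (x * (x - 2)) ^ 2 - (2 * y) ^ 2 = x * (x - 8) * (x ^ 2 + 64) by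
        linear_combination -4 * h]
      exact mul_pos (mul_pos hx_pos (by linarith)) hden
    rw [abs_mul 2, abs_two, abs_of_pos (mul_pos hx_pos (by linarith))] at hlt_one
    exact ⟨|y|, sq_abs y, by positivity, by linarith⟩

lemma exists_mem_Ioo_two_mul_div_one_add_sq_eq (h0 : 0 < 2 * t / (1 + t ^ 2))
    (h1 : 2 * t / (1 + t ^ 2) ≠ 1) :
    ∃ s ∈ Set.Ioo 0 1, 2 * s / (1 + s ^ 2) = 2 * t / (1 + t ^ 2) := by
  have ht : 0 < t := by
    rw [div_pos_iff_of_pos_right (by positivity)] at h0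
    linarith
  obtain hlt | rfl | hgt := lt_trichotomy t 1
  · exact ⟨t, ⟨ht, hlt⟩, rfl⟩
  · norm_num at h1
  · refine ⟨t⁻¹, ⟨inv_pos.2 ht, inv_lt_one_of_one_lt₀ hgt⟩, ?_⟩
    field_simp
    ring

lemma exists_rhombus_area_eq (hu : u ∈ Set.Ioo 0 1)
    (h : 64 * (1 - u) ^ 2 + (u * x) ^ 2 = 4 * (1 + u) * x) :
    ∃ v ∈ Set.Ioo 0 1, u * (1 - u ^ 2) = ((1 + u) / 2) ^ 2 * (2 * v / (1 + v ^ 2)) := by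
  obtain ⟨hu0, hu1⟩ := hu
  have := sub_pos.2 hu1
  have hsin : 2 * (u * x / (8 * (1 - u))) / (1 + (u * x / (8 * (1 - u))) ^ 2) =
      4 * u * (1 - u) / (1 + u) := by
    rw [div_eq_div_iff (by positivity) (by positivity)]
    field_simp
    linear_combination (-4) * h
  have hsin_lt : 4 * u * (1 - u) / (1 + u) < 1 := by
    rw [div_lt_one (by positivity)]
    nlinarith [sq_nonneg (8 * u - 3)]
  obtain ⟨v, hv, hv_sin⟩ := exists_mem_Ioo_two_mul_div_one_add_sq_eq
    (hsin ▸ by positivity) (hsin ▸ hsin_lt.ne)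
  refine ⟨v, hv, ?_⟩
  rw [hv_sin, hsin]
  field_simp
  ring

end Parametrization

/-- There are infinitely many rational right triangle and θ-rational rhombus pairs
with a common area and a common perimeter: infinitely many rationals `0 < u < 1`,
`0 < v < 1` with `u * (1 - u²) = ((1 + u)/2)² * (2v / (1 + v²))`. -/
theorem infinitely_many_rational_pairs :
    {uv : ℚ × ℚ | 0 < uv.1 ∧ uv.1 < 1 ∧ 0 < uv.2 ∧ uv.2 < 1 ∧
      uv.1 * (1 - uv.1 ^ 2) =
        ((1 + uv.1) / 2) ^ 2 * (2 * uv.2 / (1 + uv.2 ^ 2))}.Infinite := by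
  refine Set.Infinite.of_image (fun uv => Rat.padicValuation 2 2 ^ 2 /
    Rat.padicValuation 2 uv.1 ^ 2) (infinite_padicValuation_two_image_x.mono ?_)
  rintro _ ⟨x, ⟨hx, y, h⟩, rfl⟩
  have hx_ne (n : ℤ) : x ≠ n := fun hn => hx.not_ge (hn ▸ Int.padicValuation_le_one 2 n)
  obtain ⟨z, hz, hu⟩ := exists_triangleParam_mem_Ioo (hx_ne 0) (hx_ne 8) h
  have hxz := hz.trans h
  obtain ⟨v, hv, harea⟩ := exists_rhombus_area_eq hu (triangleParam_quadratic_eq hxz)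
  refine ⟨(triangleParam x z, v), ⟨hu.1, hu.2, hv.1, hv.2, harea⟩, ?_⟩
  have hval := valuation_triangleParam_sq_mul hx
    (valuation_y_sq_eq_valuation_x_cube (Int.padicValuation_le_one 2)
      (equation_map_pairCurve_iff.2 hxz) hx)
  rw [← hval]
  exact mul_div_cancel_left₀ _ (pow_ne_zero 2 ((Valuation.ne_zero_iff _).2 hu.1.ne'))
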